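/- arXiv:1509.03868 — 4 statements merged into one kernel-verified Lean document; each statement's English description precedes it below -/
import Mathlib

section
/- Let R ⊆ S be a finite ring extension with R local with maximal ideal M, and suppose S is free as an R-module of rank n ≥ 2. Then the conductor (R : S) = {r ∈ R : rS ⊆ R} is zero. -/
/-- If `R ⊆ S` is a finite extension with `R` local and `S` free of rank `n ≥ 2` over `R`,
then the conductor `(R : S)` is zero. -/
theorem conductor_eq_zero_of_free_rank_ge_two
    (R S : Type*) [CommRing R] [CommRing S] [IsLocalRing R] [Algebra R S]
    (hinj : Function.Injective (algebraMap R S))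
    [Module.Finite R S] [Module.Free R S]
    (n : ℕ) (hn : 2 ≤ n) (hrank : Module.finrank R S = n)
    (r : R) (hr : ∀ s : S, algebraMap R S r * s ∈ (algebraMap R S).range) :
    r = 0 := by
  have b : Module.Basis (Fin n) R S := Module.finBasisOfFinrankEq R S hrank
  have hunit : ∃ j, IsUnit (b.repr 1 j) := by
    by_contra! h
    have hmem : (1 : S) ∈ (IsLocalRing.maximalIdeal R).map (algebraMap R S) := by
      rw [← b.sum_repr 1]
      refine Ideal.sum_mem _ fun j _ => ?_
      rw [Algebra.smul_def]
      exact Ideal.mul_mem_right _ _ (Ideal.mem_map_of_mem _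
        ((IsLocalRing.mem_maximalIdeal _).2 (h j)))
    have htop := (Ideal.eq_top_iff_one _).2 hmem
    rw [Ideal.map_eq_top_iff _ hinj (algebraMap_isIntegral_iff.2 inferInstance)] at htop
    exact (IsLocalRing.maximalIdeal.isMaximal R).ne_top htop
  obtain ⟨j, hj⟩ := hunit
  have : Nontrivial (Fin n) := Fin.nontrivial_iff_two_le.2 hn
  obtain ⟨i, hij⟩ := exists_ne j
  obtain ⟨c, hc⟩ := hr (b i)
  have key : c • (1 : S) = r • b i := by
    rw [Algebra.smul_def, Algebra.smul_def, mul_one, hc]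
  have h1 := congrArg (fun x => b.repr x j) key
  have h2 := congrArg (fun x => b.repr x i) key
  simp [hij] at h1 h2
  have hc0 : c = 0 := by
    first
    | exact (hj.mul_left_eq_zero).1 h1
    | simpa [Finsupp.single_apply, hij, hj.mul_left_eq_zero] using h1
  rw [← h2, hc0, zero_mul]
end

section
/- Let R ⊆ S be a module-finite étale ring extension with R Artinian and P a prime ideal of R. If the fiber cardinality n(P) := |Spec(κ(P) ⊗_R S)| equals the dimension [S/PS : R/P] of S/PS as an R/P-vector space, then the localization S_P is isomorphic as an R_P-algebra to (R_P)^{n(P)}. -/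
open TensorProduct

theorem li_aux {k K ι : Type*} [Field k] [CommRing K] [Algebra k K] (e : ι → K)
    (he : OrthogonalIdempotents e) (h0 : ∀ i, e i ≠ 0) : LinearIndependent k e := by
  classical
  rw [linearIndependent_iff']
  intro s g hg i hi
  have h1 : (∑ j ∈ s, g j • e j) * e i = g i • e i := by
    simp only [Finset.sum_mul, smul_mul_assoc, he.mul_eq]
    rw [Finset.sum_eq_single i]
    · simp
    · intro j _ hj; simp [hj]
    · exact fun h => (h hi).elim
  rw [hg, zero_mul] at h1
  exact (smul_eq_zero.mp h1.symm).resolve_right (h0 i)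

theorem nil_aux (A B : Type*) [CommRing A] [CommRing B] [Algebra A B] [IsArtinianRing A]
    [IsLocalRing A] (x : B)
    (hx : (1 : IsLocalRing.ResidueField A) ⊗ₜ[A] x = 0) : IsNilpotent x := by
  have h1 : x ∈ (IsLocalRing.maximalIdeal A).map (algebraMap A B) := by
    rw [← Ideal.Quotient.eq_zero_iff_mem]
    apply (Algebra.TensorProduct.quotIdealMapEquivQuotTensor B (IsLocalRing.maximalIdeal A)).injective
    rw [map_zero]
    exact hx
  obtain ⟨n, hn⟩ := IsArtinianRing.isNilpotent_jacobson_bot (R := A)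
  rw [IsLocalRing.jacobson_eq_maximalIdeal _ bot_ne_top] at hn
  refine ⟨n, ?_⟩
  have := Ideal.pow_mem_pow h1 n
  rw [← Ideal.map_pow, hn] at this
  simpa using this

theorem main_aux (A B : Type*) [CommRing A] [CommRing B] [Algebra A B] [IsArtinianRing A]
    [IsLocalRing A] [Module.Finite A B] [Module.Flat A B] (n : ℕ)
    (hn : Nat.card (PrimeSpectrum (IsLocalRing.ResidueField A ⊗[A] B)) = n)
    (h : n = Module.finrank (IsLocalRing.ResidueField A) (IsLocalRing.ResidueField A ⊗[A] B)) :
    Nonempty (B ≃ₐ[A] (Fin n → A)) := by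
  classical
  set k := IsLocalRing.ResidueField A
  set K := k ⊗[A] B
  have : IsArtinianRing K := IsArtinianRing.of_finite k K
  have : Finite (PrimeSpectrum K) := inferInstance
  let ε : MaximalSpectrum K ≃ Fin n :=
    (IsArtinianRing.primeSpectrumEquivMaximalSpectrum).symm.trans (Finite.equivFinOfCardEq hn)
  let q : B →+* K := (Algebra.TensorProduct.includeRight : B →ₐ[A] K).toRingHom
  have hq : Function.Surjective q :=
    TensorProduct.mk_surjective A B k Ideal.Quotient.mk_surjective
  let g : K →+* ((I : MaximalSpectrum K) → K ⧸ I.asIdeal) :=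
    (IsArtinianRing.quotNilradicalEquivPi K : _ →+* _).comp (Ideal.Quotient.mk (nilradical K))
  have hg : Function.Surjective g :=
    (IsArtinianRing.quotNilradicalEquivPi K).surjective.comp Ideal.Quotient.mk_surjective
  have hker : ∀ x ∈ RingHom.ker (g.comp q), IsNilpotent x := by
    intro x hx
    have h1 : Ideal.Quotient.mk (nilradical K) (q x) = 0 := by
      apply (IsArtinianRing.quotNilradicalEquivPi K).injective
      rw [map_zero]
      exact hx
    rw [Ideal.Quotient.eq_zero_iff_mem, mem_nilradical] at h1
    obtain ⟨N, hN⟩ := h1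
    rw [← map_pow] at hN
    obtain ⟨L, hL⟩ := nil_aux A B (x ^ N) hN
    exact ⟨N * L, by rw [pow_mul, hL]⟩
  have : Fintype (MaximalSpectrum K) := Fintype.ofFinite _
  have hs : CompleteOrthogonalIdempotents
      (fun I : MaximalSpectrum K => (Pi.single I 1 : (I : MaximalSpectrum K) → K ⧸ I.asIdeal)) :=
    CompleteOrthogonalIdempotents.single _
  obtain ⟨e₀, he₀, hfe₀⟩ := CompleteOrthogonalIdempotents.lift_of_isNilpotent_ker (g.comp q) hker hs
    (fun i => (hg.comp hq) _)
  let e : Fin n → B := e₀ ∘ ε.symm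
  have he : CompleteOrthogonalIdempotents e := (CompleteOrthogonalIdempotents.equiv ε.symm).mpr he₀
  have he0 : ∀ i, q (e i) ≠ 0 := by
    intro i hi
    have h1 := congrFun hfe₀ (ε.symm i)
    have h2 : (g.comp q) (e₀ (ε.symm i)) = 0 := by
      rw [RingHom.comp_apply]; erw [hi]; simp
    simp only [Function.comp_apply, h2] at h1
    have h3 := congrFun h1 (ε.symm i)
    simp at h3
  have hli : LinearIndependent k (q ∘ e) := li_aux _ (he.map q).1 he0
  let b := basisOfLinearIndependentOfCardEqFinrank' (q ∘ e) hli (by rw [← h]; simp)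
  have hspan := IsLocalRing.span_eq_top_of_tmul_eq_basis e b (fun i => by
    simp [b]; rfl)
  have hli' : LinearIndependent A e := Module.IsLocalRing.linearIndependent_of_flat e hli
  let b' := Module.Basis.mk hli' hspan.ge
  have hb' : ∀ i, b' i = e i := fun i => by simp [b']
  have hsymm : ∀ x, b'.equivFun.symm x = ∑ i, x i • e i := fun x => by
    simp [Module.Basis.equivFun_symm_apply, hb']
  refine ⟨(AlgEquiv.ofLinearEquiv b'.equivFun.symm ?_ ?_).symm⟩
  · rw [hsymm]; simpa using he.complete
  · intro x y
    simp only [hsymm, Finset.sum_mul_sum, smul_mul_smul_comm, he.mul_eq]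
    simp

theorem equiv_aux {R B C : Type*} [CommRing R] [CommRing B] [CommRing C] (a : Algebra R B)
    [Algebra R C] (e : B ≃+* C) (h : ∀ r, e (a.algebraMap r) = algebraMap R C r) :
    Nonempty (B ≃ₐ[R] C) :=
  ⟨AlgEquiv.ofRingEquiv (f := e) h⟩

/-- For a module-finite étale extension `R ⊆ S` with `R` Artinian and `P` a prime of `R`:
if the fiber cardinality at `P` equals `[S/PS : R/P]`, then `S_P ≅ (R_P)^{n(P)}`. -/
theorem etale_fiber_card_eq_rank_localization_trivial
    (R S : Type*) [CommRing R] [CommRing S] [Algebra R S] [IsArtinianRing R]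
    (hinj : Function.Injective (algebraMap R S))
    [Module.Flat R S] [Module.Finite R S] (hfp : Algebra.FinitePresentation R S)
    (hunr : Subsingleton (Ω[S⁄R]))
    (P : Ideal R) [P.IsPrime]
    (hcard : letI : Algebra (R ⧸ P) (S ⧸ P.map (algebraMap R S)) :=
        (Ideal.quotientMap (P.map (algebraMap R S)) (algebraMap R S)
          Ideal.le_comap_map).toAlgebra
      Nat.card {Q : Ideal S // Q.IsPrime ∧ Q.comap (algebraMap R S) = P}
        = Module.finrank (R ⧸ P) (S ⧸ P.map (algebraMap R S))) :
    letI : Algebra R (Localization (Algebra.algebraMapSubmonoid S P.primeCompl)) :=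
      ((algebraMap S (Localization (Algebra.algebraMapSubmonoid S P.primeCompl))).comp
        (algebraMap R S)).toAlgebra
    Nonempty ((Localization (Algebra.algebraMapSubmonoid S P.primeCompl)) ≃ₐ[R]
      (Fin (Nat.card {Q : Ideal S // Q.IsPrime ∧ Q.comap (algebraMap R S) = P}) →
        Localization.AtPrime P)) := by
  classical
  have hmax : P.IsMaximal := inferInstance
  have hfin : Module.finrank P.ResidueField (P.ResidueField ⊗[R] S) =
      Module.finrank (R ⧸ P) (S ⧸ P.map (algebraMap R S)) := by
    let : Field (R ⧸ P) := Ideal.Quotient.field P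
    rw [LinearEquiv.finrank_eq
      (Algebra.TensorProduct.quotIdealMapEquivQuotTensor S P).toLinearEquiv,
      ← Module.finrank_baseChange (R := P.ResidueField) (S := R ⧸ P) (M' := (R ⧸ P) ⊗[R] S)]
    exact (LinearEquiv.finrank_eq
      (AlgebraTensorModule.cancelBaseChange R (R ⧸ P) P.ResidueField P.ResidueField S)).symm
  have hcard' : Nat.card {Q : Ideal S // Q.IsPrime ∧ Q.comap (algebraMap R S) = P} =
      Module.finrank (R ⧸ P) (S ⧸ P.map (algebraMap R S)) := by
    rw [hcard]
    congr 2
    refine Algebra.algebra_ext _ _ fun r => ?_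
    obtain ⟨r, rfl⟩ := Ideal.Quotient.mk_surjective r
    rfl
  have hc2 : Nat.card (PrimeSpectrum (P.ResidueField ⊗[R] S)) =
      Nat.card {Q : Ideal S // Q.IsPrime ∧ Q.comap (algebraMap R S) = P} := by
    rw [← Nat.card_congr (PrimeSpectrum.primesOverOrderIsoFiber R S P).toEquiv]
    refine Nat.card_congr (Equiv.subtypeEquivRight fun Q => ?_)
    exact and_congr_right fun _ => ⟨fun h => h.1.symm, fun h => ⟨h.symm⟩⟩
  generalize Nat.card {Q : Ideal S // Q.IsPrime ∧ Q.comap (algebraMap R S) = P} = n at *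
  have : IsArtinianRing (Localization.AtPrime P) :=
    inferInstance
  let c := Algebra.TensorProduct.cancelBaseChange R (Localization.AtPrime P) P.ResidueField
    P.ResidueField S
  obtain ⟨f⟩ := main_aux (Localization.AtPrime P) (Localization.AtPrime P ⊗[R] S) n
    (by rw [← hc2]; exact Nat.card_congr (PrimeSpectrum.comapEquiv c.toRingEquiv).toEquiv)
    (by rw [hcard', ← hfin]; exact (LinearEquiv.finrank_eq c.toLinearEquiv).symm)
  let l := IsLocalization.algEquiv (Algebra.algebraMapSubmonoid S P.primeCompl)
    (Localization (Algebra.algebraMapSubmonoid S P.primeCompl)) (S ⊗[R] Localization.AtPrime P)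
  let t := Algebra.TensorProduct.comm R S (Localization.AtPrime P)
  apply equiv_aux _ ((l.toRingEquiv.trans t.toRingEquiv).trans f.toRingEquiv)
  intro r
  have h1 : l (algebraMap S _ (algebraMap R S r)) = algebraMap R S r ⊗ₜ 1 := l.commutes _
  have h2 : t (algebraMap R S r ⊗ₜ 1) = algebraMap R (Localization.AtPrime P ⊗[R] S) r := by
    rw [← Algebra.TensorProduct.algebraMap_apply, t.commutes]
  have h3 : f (algebraMap R (Localization.AtPrime P ⊗[R] S) r) = algebraMap R _ r :=
    (f.restrictScalars R).commutes r
  change f (t (l (algebraMap S _ (algebraMap R S r)))) = _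
  rw [h1, h2, h3]
end

section
/- A subintegral ring extension R ⊂ S with R ≠ S that is of finite type is never unramified; that is, if R ⊊ S is subintegral and of finite type, then Ω_{S/R} ≠ 0. -/
/-- A proper subintegral extension of finite type is never unramified: `Ω[S⁄R] ≠ 0`. -/
theorem subintegral_not_unramified
    (R S : Type*) [CommRing R] [CommRing S] [Algebra R S]
    (hinj : Function.Injective (algebraMap R S))
    (hne : ¬ Function.Surjective (algebraMap R S))
    (hft : Algebra.FiniteType R S)
    [Algebra.IsIntegral R S]
    (hspec : Function.Bijective (PrimeSpectrum.comap (algebraMap R S)))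
    (hres : ∀ (Q : Ideal S) (hQ : Q.IsPrime),
      haveI := hQ
      haveI := Localization.isLocalHom_localRingHom (Q.comap (algebraMap R S)) Q
        (algebraMap R S) rfl
      Function.Bijective (IsLocalRing.ResidueField.map
        (Localization.localRingHom (Q.comap (algebraMap R S)) Q (algebraMap R S) rfl))) :
    ¬ Subsingleton (Ω[S⁄R]) := by
  intro hΩ
  apply hne
  have hfu : Algebra.FormallyUnramified R S := ⟨hΩ⟩
  have hfin : Module.Finite R S := Algebra.IsIntegral.finite
  have hfaith : FaithfulSMul R S := (faithfulSMul_iff_algebraMap_injective R S).mpr hinj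
  -- every prime of `R` has a basic open neighbourhood over which `R → S` is surjective
  have key : ∀ p : Ideal R, p.IsPrime → ∃ r ∉ p,
      Function.Surjective (Localization.awayMap (algebraMap R S) r) := by
    intro p hp
    obtain ⟨⟨q, hq⟩, hqp⟩ := hspec.2 ⟨p, hp⟩
    have hqp' : q.comap (algebraMap R S) = p := congrArg PrimeSpectrum.asIdeal hqp
    subst hqp'
    have hlies : q.LiesOver (q.comap (algebraMap R S)) := ⟨rfl⟩
    have hsing : (q.comap (algebraMap R S)).primesOver S = {q} := by
      ext q'
      simp only [Ideal.primesOver, Set.mem_setOf_eq, Set.mem_singleton_iff]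
      constructor
      · rintro ⟨h1, h2⟩
        have := hspec.1 (a₁ := ⟨q', h1⟩) (a₂ := ⟨q, hq⟩) (PrimeSpectrum.ext h2.over.symm)
        exact congrArg PrimeSpectrum.asIdeal this
      · rintro rfl
        exact ⟨hq, hlies⟩
    letI : Algebra (Localization.AtPrime (q.comap (algebraMap R S))) (Localization.AtPrime q) :=
      (Localization.localRingHom (q.comap (algebraMap R S)) q (algebraMap R S) rfl).toAlgebra
    haveI : Localization.AtPrime.IsLiesOverAlgebra (q.comap (algebraMap R S)) q := ⟨rfl⟩
    have H : Function.Surjective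
        (algebraMap (q.comap (algebraMap R S)).ResidueField q.ResidueField) := (hres q hq).2
    obtain ⟨r, hr, h⟩ :=
      Localization.exists_awayMap_bijective_of_residueField_surjective hsing H
    exact ⟨r, hr, (h r dvd_rfl).2⟩
  intro s
  -- the conductor of `s` is the unit ideal
  let I : Ideal R := (LinearMap.range (Algebra.linearMap R S)).comap
    (LinearMap.toSpanSingleton R S s)
  have hI : I = ⊤ := by
    by_contra hI
    obtain ⟨m, hm, hIm⟩ := Ideal.exists_le_maximal I hI
    obtain ⟨r, hr, hsurj⟩ := key m hm.isPrime
    obtain ⟨b, n, e⟩ := Localization.awayMap_surjective_iff.mp hsurj s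
    refine hr (hm.isPrime.mem_of_pow_mem n (hIm ?_))
    refine ⟨b, ?_⟩
    simp [Algebra.linearMap_apply, e, Algebra.smul_def]
  have h1 : (1 : R) ∈ I := hI ▸ Submodule.mem_top
  obtain ⟨b, hb⟩ := h1
  exact ⟨b, by simpa using hb⟩
end

section
/- Let (R, M) be a local Henselian commutative ring and R ⊆ A a module-finite ring extension. Then A is isomorphic to the product of its localizations at its (finitely many) maximal ideals: A ≅ ∏_{N ∈ Max(A)} A_N. -/
open TensorProduct Polynomial

/-- An étale algebra over a Henselian local ring with a rational point over the maximal ideal has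
a section through that point. -/
theorem HenselAux.exists_section {R R' : Type*} [CommRing R] [HenselianLocalRing R]
    [CommRing R'] [Algebra R R'] [Algebra.Etale R R'] (P : Ideal R') [P.IsPrime]
    [P.LiesOver (IsLocalRing.maximalIdeal R)]
    (H : Function.Bijective (Ideal.ResidueField.mapₐ (IsLocalRing.maximalIdeal R) P
      (Algebra.ofId _ _) (P.over_def (IsLocalRing.maximalIdeal R)))) :
    ∃ σ : R' →ₐ[R] R, ∀ r, σ r ∈ IsLocalRing.maximalIdeal R ↔ r ∈ P := by
  set m := IsLocalRing.maximalIdeal R with hm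
  obtain ⟨f, hfP, ⟨⟨S⟩⟩⟩ := Algebra.IsEtaleAt.exists_isStandardEtale (R := R) P
  let ε := AlgEquiv.ofBijective _ H
  let φ : R' →ₐ[R] m.ResidueField :=
    ε.symm.toAlgHom.comp (IsScalarTower.toAlgHom R R' P.ResidueField)
  have hφ : ∀ r, φ r = 0 ↔ r ∈ P := by
    intro r
    simp [φ]
  let φ' : Localization.Away f →ₐ[R] m.ResidueField :=
    IsLocalization.Away.liftAlgHom f (f := φ)
      (isUnit_iff_ne_zero.mpr fun h => hfP ((hφ f).mp h))
  have hφ' : ∀ r, φ' (algebraMap R' _ r) = φ r := by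
    intro r
    simp [φ']
  obtain ⟨a₀, ha₀⟩ : ∃ a₀ : R, algebraMap R m.ResidueField a₀ = φ' S.x :=
    Ideal.algebraMap_residueField_surjective m _
  have hmap : S.HasMap (φ' S.x) := S.hasMap.map φ'
  have hzero : ∀ r : R, algebraMap R m.ResidueField r = 0 ↔ r ∈ m := fun r =>
    Ideal.algebraMap_residueField_eq_zero
  have hev : ∀ (p : R[X]) (b : R), aeval (algebraMap R m.ResidueField b) p =
      algebraMap R m.ResidueField (p.eval b) := by
    intro p b
    rw [aeval_algebraMap_apply, coe_aeval_eq_eval]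
  have hunit : ∀ r : R, IsUnit (algebraMap R m.ResidueField r) → IsUnit r := by
    intro r hr
    by_contra h
    exact hr.ne_zero ((hzero r).mpr ((IsLocalRing.mem_maximalIdeal r).mpr h))
  obtain ⟨a, ha, haa⟩ := HenselianLocalRing.is_henselian S.f S.monic_f a₀
    (by
      have := hmap.1
      rw [← ha₀, hev, hzero] at this
      exact this)
    (by
      have := hmap.isUnit_derivative_f
      rw [← ha₀, hev] at this
      exact hunit _ this)
  have haeq : algebraMap R m.ResidueField a = φ' S.x := by
    rw [← ha₀, ← sub_eq_zero, ← map_sub, hzero]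
    exact haa
  have hmapa : S.HasMap a := by
    refine ⟨by simpa using ha, ?_⟩
    have := hmap.2
    rw [← haeq, hev] at this
    simpa using hunit _ this
  let τ : Localization.Away f →ₐ[R] R := (S.lift a hmapa).comp S.equivRing.toAlgHom
  have hτ : (Algebra.ofId R m.ResidueField).comp τ = φ' := by
    have : ((Algebra.ofId R m.ResidueField).comp τ).comp S.equivRing.symm.toAlgHom =
        φ'.comp S.equivRing.symm.toAlgHom := by
      apply StandardEtalePair.hom_ext
      simp [τ, Algebra.ofId_apply, haeq]
    refine AlgHom.ext fun y => ?_
    have := DFunLike.congr_fun this (S.equivRing y)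
    simpa using this
  refine ⟨τ.comp (IsScalarTower.toAlgHom R R' _), fun r => ?_⟩
  rw [← hφ, ← hφ', ← hτ, ← hzero]
  rfl

theorem HenselAux.exists_idempotent {R A : Type*} [CommRing R] [HenselianLocalRing R]
    [CommRing A] [Algebra R A] [Module.Finite R A] (N : Ideal A) [N.IsMaximal] :
    ∃ e : A, IsIdempotentElem e ∧ e ∉ N ∧ ∀ N' : Ideal A, N'.IsMaximal → N' ≠ N → e ∈ N' := by
  have hover : ∀ N' : Ideal A, N'.IsMaximal → N'.LiesOver (IsLocalRing.maximalIdeal R) := by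
    intro N' _
    exact ⟨(IsLocalRing.eq_maximalIdeal (Ideal.IsMaximal.under R N')).symm⟩
  have := hover N inferInstance
  obtain ⟨R', _, _, _, P, _, _, e, he, P', _, _, hP'q, heP', hbij, -, huniq⟩ :=
    Algebra.exists_etale_isIdempotentElem_forall_liesOver_eq (IsLocalRing.maximalIdeal R) N
  obtain ⟨σ, hσ⟩ := HenselAux.exists_section P hbij
  let ψ : R' ⊗[R] A →ₐ[R] A :=
    Algebra.TensorProduct.lift ((Algebra.ofId R A).comp σ) (.id R A) (fun _ _ => .all _ _)
  have hψr : ∀ a, ψ (Algebra.TensorProduct.includeRight a) = a := by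
    intro a; simp [ψ]
  have hψl : ∀ r, ψ (algebraMap R' _ r) = algebraMap R A (σ r) := by
    intro r; simp [ψ, Algebra.ofId_apply]
  have hcomap : ∀ N' : Ideal A, (N'.comap ψ.toRingHom).comap
      Algebra.TensorProduct.includeRight.toRingHom = N' := by
    intro N'
    ext a
    exact iff_of_eq (congrArg (· ∈ N') (hψr a))
  have hlies : ∀ N' : Ideal A, N'.IsMaximal → (N'.comap ψ.toRingHom).LiesOver P := by
    intro N' hN'
    have := hover N' hN'
    refine ⟨?_⟩
    ext r
    rw [← hσ, N'.over_def (IsLocalRing.maximalIdeal R)]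
    exact iff_of_eq (congrArg (· ∈ N') (hψl r).symm)
  refine ⟨ψ e, he.map ψ, ?_, ?_⟩
  · have := hlies N inferInstance
    have h : P' = N.comap ψ.toRingHom :=
      Ideal.eq_of_comap_eq_comap_of_bijective_residueFieldMap hbij _ _ (by rw [hP'q, hcomap])
    intro h'
    apply heP'
    rw [h]
    exact h'
  · intro N' hN' hne
    by_contra h
    have := huniq (N'.comap ψ.toRingHom) inferInstance (hlies N' hN') h
    apply hne
    rw [← hcomap N', this, hP'q]

/-- A module-finite extension of a Henselian local ring is the product of its
localizations at its finitely many maximal ideals. -/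
theorem henselian_finite_product_of_localizations
    (R A : Type*) [CommRing R] [IsLocalRing R] [HenselianLocalRing R]
    [CommRing A] [Algebra R A] (hinj : Function.Injective (algebraMap R A))
    [Module.Finite R A] :
    {N : Ideal A | N.IsMaximal}.Finite ∧
      Nonempty (A ≃+* ((N : {N : Ideal A // N.IsMaximal}) →
        @Localization.AtPrime A _ N.1 N.2.isPrime)) := by
  classical
  have hfin : {N : Ideal A | N.IsMaximal}.Finite := by
    refine (Algebra.QuasiFinite.finite_primesOver (S := A)
      (IsLocalRing.maximalIdeal R)).subset ?_
    intro N hN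
    have : N.IsMaximal := hN
    exact ⟨this.isPrime, ⟨(IsLocalRing.eq_maximalIdeal (Ideal.IsMaximal.under R N)).symm⟩⟩
  refine ⟨hfin, ?_⟩
  have hfinite : Finite {N : Ideal A // N.IsMaximal} := hfin
  have := Fintype.ofFinite {N : Ideal A // N.IsMaximal}
  have hprime : ∀ N : {N : Ideal A // N.IsMaximal}, N.1.IsPrime := fun N => N.2.isPrime
  have hid : ∀ N : {N : Ideal A // N.IsMaximal}, ∃ e : A, IsIdempotentElem e ∧ e ∉ N.1 ∧
      ∀ N' : Ideal A, N'.IsMaximal → N' ≠ N.1 → e ∈ N' := fun N =>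
    have := N.2
    HenselAux.exists_idempotent (R := R) N.1
  choose e he heN heN' using hid
  let Φ : A →+* ((N : {N : Ideal A // N.IsMaximal}) → Localization.AtPrime N.1) :=
    RingHom.pi fun N => algebraMap A (Localization.AtPrime N.1)
  have he1 : ∀ N, algebraMap A (Localization.AtPrime N.1) (e N) = 1 := by
    intro N
    have hu : IsUnit (algebraMap A (Localization.AtPrime N.1) (e N)) :=
      IsLocalization.map_units _ (⟨e N, heN N⟩ : N.1.primeCompl)
    apply hu.mul_left_cancel
    rw [← map_mul, he N, mul_one]
  have he0 : ∀ N N', N' ≠ N → algebraMap A (Localization.AtPrime N'.1) (e N) = 0 := by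
    intro N N' hne
    have h1 : 1 - e N ∉ N'.1 := by
      intro h
      apply (hprime N').one_notMem
      have := add_mem h (heN' N N'.1 N'.2 (fun h => hne (Subtype.ext h)))
      simpa using this
    have hu : IsUnit (algebraMap A (Localization.AtPrime N'.1) (1 - e N)) :=
      IsLocalization.map_units _ (⟨1 - e N, h1⟩ : N'.1.primeCompl)
    apply hu.mul_left_cancel
    rw [← map_mul, mul_zero, sub_mul, one_mul, he N, sub_self, map_zero]
  have hsurj : ∀ N : {N : Ideal A // N.IsMaximal}, Function.Surjective (algebraMap A (Localization.AtPrime N.1)) := by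
    intro N y
    obtain ⟨⟨a, s⟩, hy⟩ := IsLocalization.surj N.1.primeCompl y
    have hunit : IsUnit (s.1 * e N + (1 - e N)) := by
      by_contra hnu
      obtain ⟨M, hM, hmem⟩ := exists_max_ideal_of_mem_nonunits hnu
      by_cases hMN : M = N.1
      · subst hMN
        have h2 : (s.1 * e N + (1 - e N)) * e N ∈ N.1 := Ideal.mul_mem_right _ _ hmem
        have h3 : (s.1 * e N + (1 - e N)) * e N = s.1 * e N := by
          linear_combination (s.1 - 1) * (he N).eq
        rw [h3] at h2
        rcases (hprime N).mem_or_mem h2 with h | h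
        · exact s.2 h
        · exact heN N h
      · have h1 := heN' N M hM hMN
        apply hM.isPrime.one_notMem
        have h4 : (1 : A) = (s.1 * e N + (1 - e N)) - (s.1 - 1) * e N := by ring
        rw [h4]
        exact sub_mem hmem (Ideal.mul_mem_left _ _ h1)
    obtain ⟨u, hu⟩ := hunit.exists_right_inv
    refine ⟨a * u, ?_⟩
    have h5 := congrArg (algebraMap A (Localization.AtPrime N.1)) hu
    simp only [map_mul, map_add, map_sub, map_one, he1, mul_one, sub_self, add_zero] at h5
    rw [map_mul, ← hy, mul_assoc]
    simp only [h5, mul_one]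
  refine ⟨RingEquiv.ofBijective Φ ⟨?_, ?_⟩⟩
  · intro x y hxy
    apply MaximalSpectrum.toPiLocalization_injective A
    funext I
    exact congrFun hxy ⟨I.1, I.2⟩
  · intro y
    choose a ha using fun N => hsurj N (y N)
    refine ⟨∑ N, e N * a N, ?_⟩
    funext N
    change algebraMap A (Localization.AtPrime N.1) (∑ N, e N * a N) = y N
    rw [map_sum, Finset.sum_eq_single N]
    · rw [map_mul, he1, one_mul, ha]
    · intro N' _ hne
      rw [map_mul, he0 N' N hne.symm, zero_mul]
    · intro h
      exact absurd (Finset.mem_univ _) h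
end
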